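/- arXiv:2206.03176 — 11 statements merged into one kernel-verified Lean document; each statement's English description precedes it below -/
import Mathlib

section
/- Let (X,r) be a non-degenerate involutive set-theoretic solution of the Yang–Baxter equation with structure group G(X,r), let φ : G(X,r) → Sym(X) be the homomorphism with φ(x) = σ_x, and let ℤ^X be the free abelian group with basis {t_x : x ∈ X}, on which G(X,r) acts by g • t_x = t_{φ(g)(x)}. Then there exists a bijective map π : G(X,r) → ℤ^X such that π(x) = t_x for every x ∈ X and π(gh) = π(g) + g • π(h) for all g,h ∈ G(X,r) (i.e., π is a bijective 1-cocycle). -/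
open scoped BigOperators

section YB

variable {X : Type*}

/-- `r¹² = r × id` acting on the first two components of `X³`. -/
def r12 (r : X × X → X × X) : X × X × X → X × X × X :=
  fun p => ((r (p.1, p.2.1)).1, (r (p.1, p.2.1)).2, p.2.2)

/-- `r²³ = id × r` acting on the last two components of `X³`. -/
def r23 (r : X × X → X × X) : X × X × X → X × X × X :=
  fun p => (p.1, r (p.2.1, p.2.2))

/-- A set-theoretic solution of the Yang–Baxter equation: a bijection
`r : X × X → X × X` satisfying the braid relation `r¹² r²³ r¹² = r²³ r¹² r²³`. -/
structure YBSol (X : Type*) where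
  r : X × X → X × X
  bij : Function.Bijective r
  braid : r12 r ∘ r23 r ∘ r12 r = r23 r ∘ r12 r ∘ r23 r

namespace YBSol

variable (S : YBSol X)

/-- `σ_x(y)`, the first component of `r(x,y)`. -/
def σ (x y : X) : X := (S.r (x, y)).1

/-- `γ_y(x)`, the second component of `r(x,y)`. -/
def γ (y x : X) : X := (S.r (x, y)).2

/-- Non-degeneracy: all the maps `σ_x` and `γ_y` are bijections of `X`. -/
def NonDeg : Prop :=
  (∀ x, Function.Bijective (S.σ x)) ∧ (∀ y, Function.Bijective (S.γ y))

/-- Involutivity: `r ∘ r = id`. -/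
def Invol : Prop := S.r ∘ S.r = id

/-- The defining relations `x·y = σ_x(y)·γ_y(x)` of the structure group. -/
def rels : Set (FreeGroup X) :=
  { w | ∃ x y : X,
      w = FreeGroup.of x * FreeGroup.of y *
        (FreeGroup.of (S.σ x y) * FreeGroup.of (S.γ y x))⁻¹ }

/-- The structure group `G(X,r) = Gp⟨X ∣ x·y = σ_x(y)·γ_y(x)⟩`. -/
abbrev G := PresentedGroup S.rels

/-- The image of a generator `x ∈ X` in the structure group. -/
def gen (x : X) : S.G := PresentedGroup.of x

end YBSol

/-- `sigIter S D k x` is the composite `σ_x ∘ σ_{D(x)} ∘ ⋯ ∘ σ_{D^{k-1}(x)}`. -/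
def sigIter (S : YBSol X) (D : X → X) : ℕ → X → X → X
  | 0, _ => id
  | k + 1, x => S.σ x ∘ sigIter S D k (D x)

end YB

/-!
The cocycle is the first component of the homomorphism `G(X,r) → ℤ^X ⋊ Sym(X)` sending `x` to
`(t_x, σ_x)`; the defining relations hold there because `r` is involutive.

For bijectivity, `T_x g = g · φ(g)⁻¹(x)` defines a map `T_x : G(X,r) → G(X,r)` that `π` carries to
the translation by `t_x`. Under `g ↦ φ(g)⁻¹(x)` the map `T_x` becomes `D : a ↦ σ_a⁻¹(a)`, and
`D` is a bijection by non-degeneracy, whence so is `T_x`. The `T_x` commute by the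
defining relations, so they generate an action of `ℤ^X` on `G(X,r)`. This action is transitive since
`g · x = T_{φ(g)(x)} g`, and `π` is equivariant from it to the regular action of `ℤ^X`, hence
bijective.
-/

open Function Equiv

section FreeAbelian

variable {X : Type*}

theorem closure_range_single_one :
    AddSubgroup.closure (Set.range fun x : X => Finsupp.single x (1 : ℤ)) = ⊤ := by
  have hspan := (Finsupp.basisSingleOne (R := ℤ) (ι := X)).span_eq
  rw [Finsupp.coe_basisSingleOne] at hspan
  rw [← Submodule.span_int_eq_addSubgroupClosure, hspan, Submodule.top_toAddSubgroup]

open scoped IsMulCommutative in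
theorem exists_addMonoidHom_single_of_commute {A : Type*} [Group A] (T : X → A)
    (hcomm : ∀ x y, Commute (T x) (T y)) :
    ∃ F : (X →₀ ℤ) →+ Additive A, ∀ x, F (Finsupp.single x 1) = Additive.ofMul (T x) := by
  have : IsMulCommutative (Subgroup.closure (Set.range T)) :=
    Subgroup.isMulCommutative_closure (by rintro _ ⟨x, rfl⟩ _ ⟨y, rfl⟩; exact hcomm x y)
  let t (x : X) : Subgroup.closure (Set.range T) := ⟨T x, Subgroup.subset_closure ⟨x, rfl⟩⟩
  let L : (X →₀ ℤ) →+ Additive (Subgroup.closure (Set.range T)) :=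
    Finsupp.liftAddHom fun x => zmultiplesHom _ (Additive.ofMul (t x))
  refine ⟨(Subgroup.closure (Set.range T)).subtype.toAdditive.comp L, fun x => ?_⟩
  simp [L, t]

variable {α : Type*} {T : X → Perm α} {π : α → X →₀ ℤ}

theorem apply_addMonoidHom_eq_add_of_forall_single {F : (X →₀ ℤ) →+ Additive (Perm α)}
    (hF : ∀ x a, π ((F (Finsupp.single x 1)).toMul a) = Finsupp.single x 1 + π a)
    (v : X →₀ ℤ) (a : α) : π ((F v).toMul a) = v + π a := by
  have hv : v ∈ AddSubgroup.closure (Set.range fun x : X => Finsupp.single x (1 : ℤ)) :=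
    closure_range_single_one ▸ AddSubgroup.mem_top v
  induction hv using AddSubgroup.closure_induction generalizing a with
  | mem _ hx => obtain ⟨x, rfl⟩ := hx; exact hF x a
  | zero => simp
  | add v w _ _ ihv ihw => rw [map_add, toMul_add, Perm.mul_apply, ihv, ihw, add_assoc]
  | neg v _ ih =>
    rw [eq_neg_add_iff_add_eq, ← ih, map_neg, toMul_neg, Perm.coe_inv, apply_symm_apply]

theorem bijective_of_translations [Nonempty α]
    [MulAction.IsPretransitive (Subgroup.closure (Set.range T)) α]
    (hcomm : ∀ x y, Commute (T x) (T y))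
    (hπ : ∀ x a, π (T x a) = Finsupp.single x 1 + π a) : Bijective π := by
  obtain ⟨F, hF⟩ := exists_addMonoidHom_single_of_commute T hcomm
  have hπF : ∀ v a, π ((F v).toMul a) = v + π a :=
    apply_addMonoidHom_eq_add_of_forall_single fun x a => by rw [hF, toMul_ofMul, hπ]
  have hrange : Subgroup.closure (Set.range T) ≤ (AddMonoidHom.toMultiplicativeLeft F).range := by
    rw [Subgroup.closure_le]
    rintro _ ⟨x, rfl⟩
    exact ⟨Multiplicative.ofAdd (Finsupp.single x 1), hF x⟩
  have htrans (a b : α) : ∃ v, (F v).toMul a = b := by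
    obtain ⟨⟨p, hp⟩, rfl⟩ := MulAction.exists_smul_eq (Subgroup.closure (Set.range T)) a b
    obtain ⟨v, rfl⟩ := hrange hp
    exact ⟨v.toAdd, rfl⟩
  refine ⟨fun a b hab => ?_, fun v => ?_⟩
  · obtain ⟨v, rfl⟩ := htrans a b
    have hv : v = 0 := by simpa [hπF] using hab
    simp [hv]
  · obtain ⟨a⟩ := ‹Nonempty α›
    exact ⟨(F (v - π a)).toMul a, by rw [hπF, sub_add_cancel]⟩

end FreeAbelian

section Translation

variable {X G : Type*} [Group G] {φ : G →* Perm X} {ι : X → G} {D : Perm X}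

/-- The permutation `T_x : g ↦ g · ι(φ(g)⁻¹(x))` of a group `G` acting on `X` through `φ`, which a
cocycle `π` with `π (ι x) = t_x` carries to the translation by `t_x`. The permutation `D`, which by
`hD` must be `a ↦ φ(ι a)⁻¹(a)`, is what makes `T_x` invertible. -/
def translation (hD : ∀ a, φ (ι a) (D a) = a) (x : X) : Perm G where
  toFun g := g * ι ((φ g)⁻¹ x)
  invFun g := g * (ι (D⁻¹ ((φ g)⁻¹ x)))⁻¹
  left_inv g := by
    have hsymm (a : X) : (φ (ι a)).symm a = D a := by rw [symm_apply_eq, hD]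
    simp [hsymm]
  right_inv g := by
    have hD_symm (a : X) : φ (ι (D.symm a)) a = D.symm a := by simpa using hD (D.symm a)
    simp [hD_symm]

theorem translation_apply (hD : ∀ a, φ (ι a) (D a) = a) (x : X) (g : G) :
    translation hD x g = g * ι ((φ g)⁻¹ x) := rfl

theorem translation_map_apply (hD : ∀ a, φ (ι a) (D a) = a) (g : G) (x : X) :
    translation hD (φ g x) g = g * ι x := by
  rw [translation_apply, Perm.coe_inv, symm_apply_apply]

theorem translation_commute (hD : ∀ a, φ (ι a) (D a) = a)
    (hι : ∀ a b, ι a * ι ((φ (ι a))⁻¹ b) = ι b * ι ((φ (ι b))⁻¹ a)) (x y : X) :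
    Commute (translation hD x) (translation hD y) := by
  ext g
  simp only [Perm.mul_apply, translation_apply, map_mul, mul_inv_rev, mul_assoc]
  rw [hι]

theorem isPretransitive_closure_range_translation (hD : ∀ a, φ (ι a) (D a) = a)
    (hgen : Subgroup.closure (Set.range ι) = ⊤) :
    MulAction.IsPretransitive (Subgroup.closure (Set.range (translation hD))) G := by
  let t (x : X) : Subgroup.closure (Set.range (translation hD)) :=
    ⟨translation hD x, Subgroup.subset_closure ⟨x, rfl⟩⟩
  have ht (g : G) (x : X) : t (φ g x) • g = g * ι x := translation_map_apply hD g x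
  rw [MulAction.isPretransitive_iff_base (1 : G)]
  intro g
  have hg : g ∈ Subgroup.closure (Set.range ι) := hgen ▸ Subgroup.mem_top g
  induction hg using Subgroup.closure_induction_right with
  | one => exact ⟨1, one_smul _ _⟩
  | mul_right g _ _ hx ih =>
    obtain ⟨x, rfl⟩ := hx
    obtain ⟨p, rfl⟩ := ih
    exact ⟨t (φ (p • 1) x) * p, by rw [mul_smul, ht]⟩
  | mul_inv_cancel g _ _ hx ih =>
    obtain ⟨x, rfl⟩ := hx
    obtain ⟨p, rfl⟩ := ih
    refine ⟨(t (φ (p • 1 * (ι x)⁻¹) x))⁻¹ * p, ?_⟩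
    rw [mul_smul, inv_smul_eq_iff, ht, inv_mul_cancel_right]

theorem bijective_of_cocycle {π : G → X →₀ ℤ} (hD : ∀ a, φ (ι a) (D a) = a)
    (hgen : Subgroup.closure (Set.range ι) = ⊤)
    (hι : ∀ a b, ι a * ι ((φ (ι a))⁻¹ b) = ι b * ι ((φ (ι b))⁻¹ a))
    (hπι : ∀ x, π (ι x) = Finsupp.single x 1)
    (hπmul : ∀ g h, π (g * h) = π g + Finsupp.mapDomain (φ g) (π h)) : Bijective π := by
  have := isPretransitive_closure_range_translation hD hgen
  refine bijective_of_translations (translation_commute hD hι) fun x g => ?_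
  rw [translation_apply, hπmul, hπι, Finsupp.mapDomain_single, Perm.coe_inv, apply_symm_apply,
    add_comm]

end Translation

/-- The action of `Sym(X)` on finitely supported functions by permuting the basis, as automorphisms
of the multiplicative copy of `X →₀ M`, so that a semidirect product can be formed. -/
noncomputable def permMulAut (X M : Type*) [AddCommMonoid M] :
    Perm X →* MulAut (Multiplicative (X →₀ M)) where
  toFun e := (Finsupp.domCongr e).toMultiplicative
  map_one' := congrArg AddEquiv.toMultiplicative Finsupp.domCongr_refl
  map_mul' e f := congrArg AddEquiv.toMultiplicative (Finsupp.domCongr_trans f e).symm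

theorem permMulAut_apply {X M : Type*} [AddCommMonoid M] (e : Perm X)
    (v : Multiplicative (X →₀ M)) :
    permMulAut X M e v = Multiplicative.ofAdd (Finsupp.mapDomain e v.toAdd) :=
  Finsupp.equivMapDomain_eq_mapDomain e v.toAdd

namespace YBSol

variable {X : Type*} (S : YBSol X)

theorem gen_mul_gen (x y : X) : S.gen x * S.gen y = S.gen (S.σ x y) * S.gen (S.γ y x) :=
  PresentedGroup.mk_eq_mk_of_mul_inv_mem ⟨x, y, rfl⟩

theorem closure_range_gen : Subgroup.closure (Set.range S.gen) = ⊤ :=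
  PresentedGroup.closure_range_of S.rels

theorem exists_monoidHom_gen {H : Type*} [Group H] (f : X → H)
    (hf : ∀ x y, f x * f y = f (S.σ x y) * f (S.γ y x)) :
    ∃ F : S.G →* H, ∀ x, F (S.gen x) = f x := by
  have hrels : ∀ w ∈ S.rels, FreeGroup.lift f w = 1 := by
    rintro _ ⟨x, y, rfl⟩
    simp [hf x y]
  exact ⟨PresentedGroup.toGroup hrels, fun _ => PresentedGroup.toGroup.of hrels⟩

variable {S}

theorem σ_σ_γ (hinv : S.Invol) (x y : X) : S.σ (S.σ x y) (S.γ y x) = x :=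
  congrArg Prod.fst (congrFun hinv (x, y))

theorem γ_γ_σ (hinv : S.Invol) (x y : X) : S.γ (S.γ y x) (S.σ x y) = y :=
  congrArg Prod.snd (congrFun hinv (x, y))

theorem σ_eq_left_iff (hnd : S.NonDeg) (hinv : S.Invol) {x y : X} :
    S.σ x y = x ↔ S.γ y x = y := by
  constructor <;> intro h
  · have hσ := σ_σ_γ hinv x y
    rw [h] at hσ
    exact (hnd.1 x).injective (hσ.trans h.symm)
  · have hγ := γ_γ_σ hinv x y
    rw [h] at hγ
    exact (hnd.2 y).injective (hγ.trans h.symm)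

theorem exists_perm_σ_apply_eq (hnd : S.NonDeg) (hinv : S.Invol) :
    ∃ D : Perm X, ∀ x, S.σ x (D x) = x := by
  choose D hD using fun x => (hnd.1 x).surjective x
  refine ⟨Equiv.ofBijective D ⟨fun x y hxy => ?_, fun y => ?_⟩, hD⟩
  · have hx := (σ_eq_left_iff hnd hinv).1 (hD x)
    have hy := (σ_eq_left_iff hnd hinv).1 (hD y)
    rw [← hxy] at hy
    exact (hnd.2 (D x)).injective (hx.trans hy.symm)
  · obtain ⟨x, hx⟩ := (hnd.2 y).surjective y
    exact ⟨x, (hnd.1 x).injective ((hD x).trans ((σ_eq_left_iff hnd hinv).2 hx).symm)⟩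

variable {φ : S.G →* Perm X}

theorem gen_mul_gen_inv_apply (hinv : S.Invol) (hφ : ∀ x y, φ (S.gen x) y = S.σ x y) (x y : X) :
    S.gen x * S.gen ((φ (S.gen x))⁻¹ y) = S.gen y * S.gen ((φ (S.gen y))⁻¹ x) := by
  obtain ⟨z, rfl⟩ := (φ (S.gen x)).surjective y
  have hγ : (φ (S.gen (S.σ x z)))⁻¹ x = S.γ z x := by
    rw [Perm.inv_eq_iff_eq, hφ, σ_σ_γ hinv]
  rw [Perm.coe_inv, symm_apply_apply, hφ, hγ, gen_mul_gen]

theorem exists_cocycle (hinv : S.Invol) (hφ : ∀ x y, φ (S.gen x) y = S.σ x y) :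
    ∃ π : S.G → X →₀ ℤ, (∀ x, π (S.gen x) = Finsupp.single x 1) ∧
      ∀ g h, π (g * h) = π g + Finsupp.mapDomain (φ g) (π h) := by
  obtain ⟨F, hF⟩ := S.exists_monoidHom_gen
    (H := Multiplicative (X →₀ ℤ) ⋊[permMulAut X ℤ] Perm X)
    (fun x => ⟨Multiplicative.ofAdd (Finsupp.single x 1), φ (S.gen x)⟩) fun x y => by
      ext1
      · simp only [SemidirectProduct.mul_left, permMulAut_apply, toAdd_ofAdd,
          Finsupp.mapDomain_single, hφ, σ_σ_γ hinv]
        exact mul_comm _ _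
      · simp only [SemidirectProduct.mul_right, ← map_mul, gen_mul_gen S x y]
  have hright (g : S.G) : (F g).right = φ g := by
    have : SemidirectProduct.rightHom.comp F = φ :=
      PresentedGroup.ext fun x => congrArg SemidirectProduct.right (hF x)
    exact DFunLike.congr_fun this g
  refine ⟨fun g => (F g).left.toAdd, fun x => by simp only [hF, toAdd_ofAdd], fun g h => ?_⟩
  simp only [map_mul, SemidirectProduct.mul_left, hright, permMulAut_apply, toAdd_mul, toAdd_ofAdd]

end YBSol

/-- There is a bijective 1-cocycle `π : G(X,r) → ℤ^X` with `π(x) = t_x` and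
`π(gh) = π(g) + g • π(h)`, where `g • t_x = t_{φ(g)(x)}`. -/
theorem exists_bijective_one_cocycle {X : Type*} (S : YBSol X)
    (hnd : S.NonDeg) (hinv : S.Invol)
    (φ : S.G →* Equiv.Perm X) (hφ : ∀ x y : X, φ (S.gen x) y = S.σ x y) :
    ∃ π : S.G → (X →₀ ℤ), Function.Bijective π ∧
      (∀ x : X, π (S.gen x) = Finsupp.single x 1) ∧
      (∀ g h : S.G, π (g * h) = π g + Finsupp.mapDomain (⇑(φ g)) (π h)) := by
  obtain ⟨π, hπgen, hπmul⟩ := YBSol.exists_cocycle hinv hφ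
  obtain ⟨D, hD⟩ := YBSol.exists_perm_σ_apply_eq hnd hinv
  have hφD (x : X) : φ (S.gen x) (D x) = x := (hφ x (D x)).trans (hD x)
  exact ⟨π, bijective_of_cocycle hφD S.closure_range_gen
    (YBSol.gen_mul_gen_inv_apply hinv hφ) hπgen hπmul, hπgen, hπmul⟩
end

section
/- Let (X,r) be a non-degenerate involutive set-theoretic solution of the Yang–Baxter equation, and let D : X → X be defined by D(x) = σ_x^{-1}(x). Then D is a bijection of X, and its inverse is given by D^{-1}(y) = γ_y^{-1}(y) for every y ∈ X. -/
open scoped BigOperators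

/-!
A pair with `σ_x(y) = x` satisfies `r(x, y) = (x, z)` for some `z`, so `r(x, z) = (x, y)` by
involutivity; hence `σ_x(z) = x = σ_x(y)`, and injectivity of `σ_x` forces `z = y`. Thus the graph
of `D` is the fixed-point set of `r`, and symmetrically so is the transposed graph of `E`.
-/

section InvolutionOfProd

open Function

variable {α β : Type*} {r : α × β → α × β}

lemma isFixedPt_iff_fst_eq_of_involutive (hr : Involutive r) {x : α}
    (hx : Injective fun y => (r (x, y)).1) {y : β} :
    IsFixedPt r (x, y) ↔ (r (x, y)).1 = x := by
  refine ⟨congrArg Prod.fst, fun hfst => ?_⟩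
  have r_xy : r (x, y) = (x, (r (x, y)).2) := Prod.ext hfst rfl
  have r_xz : r (x, (r (x, y)).2) = (x, y) := by rw [← r_xy, hr]
  have snd_eq : (r (x, y)).2 = y := hx ((congrArg Prod.fst r_xz).trans hfst.symm)
  exact Prod.ext hfst snd_eq

lemma isFixedPt_iff_snd_eq_of_involutive (hr : Involutive r) {y : β}
    (hy : Injective fun x => (r (x, y)).2) {x : α} :
    IsFixedPt r (x, y) ↔ (r (x, y)).2 = y := by
  refine ⟨congrArg Prod.snd, fun hsnd => ?_⟩
  have r_xy : r (x, y) = ((r (x, y)).1, y) := Prod.ext rfl hsnd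
  have r_zy : r ((r (x, y)).1, y) = (x, y) := by rw [← r_xy, hr]
  have fst_eq : (r (x, y)).1 = x := hy ((congrArg Prod.snd r_zy).trans hsnd.symm)
  exact Prod.ext fst_eq hsnd

theorem D_bijective_general (hr : Involutive r)
    (hσ : ∀ x, Injective fun y => (r (x, y)).1) (hγ : ∀ y, Injective fun x => (r (x, y)).2)
    {D : α → β} {E : β → α} (hD : ∀ x, (r (x, D x)).1 = x) (hE : ∀ y, (r (E y, y)).2 = y) :
    Bijective D ∧ LeftInverse E D ∧ RightInverse E D := by
  have fixed_iff_D (x : α) (y : β) : IsFixedPt r (x, y) ↔ D x = y := by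
    rw [isFixedPt_iff_fst_eq_of_involutive hr (hσ x), ← (hσ x).eq_iff, hD, eq_comm]
  have fixed_iff_E (x : α) (y : β) : IsFixedPt r (x, y) ↔ E y = x := by
    rw [isFixedPt_iff_snd_eq_of_involutive hr (hγ y), ← (hγ y).eq_iff, hE, eq_comm]
  have left_inv : LeftInverse E D := fun x =>
    (fixed_iff_E x (D x)).1 ((fixed_iff_D x (D x)).2 rfl)
  have right_inv : RightInverse E D := fun y =>
    (fixed_iff_D (E y) y).1 ((fixed_iff_E (E y) y).2 rfl)
  exact ⟨⟨left_inv.injective, right_inv.surjective⟩, left_inv, right_inv⟩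

end InvolutionOfProd

/-- The map `D(x) = σ_x^{-1}(x)` is a bijection of `X`, with inverse
`y ↦ γ_y^{-1}(y)`. -/
theorem D_bijective {X : Type*} (S : YBSol X)
    (hnd : S.NonDeg) (hinv : S.Invol)
    (D E : X → X) (hD : ∀ x, S.σ x (D x) = x) (hE : ∀ y, S.γ y (E y) = y) :
    Function.Bijective D ∧ Function.LeftInverse E D ∧ Function.RightInverse E D :=
  D_bijective_general (r := S.r) (congrFun hinv) (fun x => (hnd.1 x).injective)
    (fun y => (hnd.2 y).injective) hD hE
end

section
/- Let (X,r) be a non-degenerate involutive set-theoretic solution of the Yang–Baxter equation and let D : X → X be defined by D(x) = σ_x^{-1}(x). Then the following are equivalent: (1) (X,r) satisfies condition (C), i.e., σ_x ∘ σ_y = id_X for all x,y ∈ X with r(x,y) = (x,y); (2) σ_x ∘ σ_{D(x)} = id_X for every x ∈ X. -/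
open scoped BigOperators

/-!
If `σ_x(y) = x`, then `r` sends `(x, y)` to `(x, γ_y(x))`, and involutivity sends this pair back to
`(x, y)`. Hence `σ_x` takes the value `x` at both `y` and `γ_y(x)`, so injectivity of `σ_x` gives
`γ_y(x) = y`. The fixed points of `r` are therefore exactly the pairs `(x, D(x))`, and the two
conditions range over the same pairs.
-/

section FixedPoints

variable {α β : Type*} {r : α × β → α × β} {a : α}

theorem apply_eq_self_iff_fst_eq (hr : Function.Involutive r)
    (hinj : Function.Injective fun b => (r (a, b)).1) {b : β} :
    r (a, b) = (a, b) ↔ (r (a, b)).1 = a := by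
  refine ⟨congrArg Prod.fst, fun hfst => Prod.ext hfst ?_⟩
  have hback : r (a, (r (a, b)).2) = (a, b) :=
    calc r (a, (r (a, b)).2) = r (r (a, b)) := congrArg r (Prod.ext hfst.symm rfl)
      _ = (a, b) := hr (a, b)
  exact hinj ((congrArg Prod.fst hback).trans hfst.symm)

theorem apply_eq_self_iff_eq_of_fst_eq (hr : Function.Involutive r)
    (hinj : Function.Injective fun b => (r (a, b)).1) {b d : β} (hd : (r (a, d)).1 = a) :
    r (a, b) = (a, b) ↔ b = d :=
  calc r (a, b) = (a, b) ↔ (r (a, b)).1 = a := apply_eq_self_iff_fst_eq hr hinj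
    _ ↔ (r (a, b)).1 = (r (a, d)).1 := by rw [hd]
    _ ↔ b = d := hinj.eq_iff

end FixedPoints

theorem condition_C_iff_general {X : Type*} {r : X × X → X × X} (hr : Function.Involutive r)
    (hinj : ∀ x, Function.Injective fun y => (r (x, y)).1)
    {D : X → X} (hD : ∀ x, (r (x, D x)).1 = x) :
    (∀ x y : X, r (x, y) = (x, y) → ∀ z, (r (x, (r (y, z)).1)).1 = z) ↔
      (∀ x z : X, (r (x, (r (D x, z)).1)).1 = z) := by
  have fixed_iff (x y : X) : r (x, y) = (x, y) ↔ y = D x :=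
    apply_eq_self_iff_eq_of_fst_eq hr (hinj x) (hD x)
  simp only [fixed_iff, forall_eq]

/-- Condition (C) — `σ_x ∘ σ_y = id` whenever `r(x,y) = (x,y)` — is equivalent to
`σ_x ∘ σ_{D(x)} = id` for every `x`. -/
theorem condition_C_iff {X : Type*} (S : YBSol X)
    (hnd : S.NonDeg) (hinv : S.Invol)
    (D : X → X) (hD : ∀ x, S.σ x (D x) = x) :
    (∀ x y : X, S.r (x, y) = (x, y) → ∀ z, S.σ x (S.σ y z) = z) ↔
      (∀ x z : X, S.σ x (S.σ (D x) z) = z) :=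
  condition_C_iff_general (r := S.r) (congrFun hinv) (fun x => (hnd.1 x).injective) hD
end

section
/- Let (X,r) be a non-degenerate involutive set-theoretic solution and let D : X → X be defined by D(x) = σ_x^{-1}(x). If (X,r) is of class m, i.e., σ_x ∘ σ_{D(x)} ∘ σ_{D²(x)} ∘ ⋯ ∘ σ_{D^{m-1}(x)} = id_X for every x ∈ X, then D^m(x) = x for every x ∈ X (the m-th iterate of D is the identity). -/
open scoped BigOperators

/-! Since `σ_x (D x) = x`, the factors of `σ_x σ_{D x} ⋯ σ_{D^{m-1} x}`, applied to `D^m x` from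
right to left, successively give `D^{m-1} x, …, D x, x`. So the product sends `D^m x` to `x`, and
if it acts trivially then `D^m x = x`. -/

theorem prod_map_range_smul_iterate {M X : Type*} [Monoid M] [MulAction M X]
    {g : X → M} {D : X → X} (hD : ∀ x, g x • D x = x) (k : ℕ) (x : X) :
    ((List.range k).map fun i => g (D^[i] x)).prod • D^[k] x = x := by
  induction k with
  | zero => simp
  | succ k ih =>
    rw [List.prod_range_succ, mul_smul, Function.iterate_succ_apply', hD, ih]

theorem D_iterate_eq_id_of_class_general {M X : Type*} [Monoid M] [MulAction M X]
    {g : X → M} {D : X → X} (hD : ∀ x, g x • D x = x) {m : ℕ} {x : X}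
    (hm : ((List.range m).map fun i => g (D^[i] x)).prod = 1) :
    D^[m] x = x := by
  simpa only [hm, one_smul] using prod_map_range_smul_iterate hD m x

/-- The map `x ↦ σ_x` into the monoid of self-maps of `X`, in which composition is a product
and application is the action. -/
def YBSol.σEnd {X : Type*} (S : YBSol X) (x : X) : Function.End X := S.σ x

theorem sigIter_eq_prod_σEnd {X : Type*} (S : YBSol X) (D : X → X) (k : ℕ) (x : X) :
    sigIter S D k x = ((List.range k).map fun i => S.σEnd (D^[i] x)).prod := by
  induction k generalizing x with
  | zero => rfl
  | succ k ih =>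
    rw [List.prod_range_succ', sigIter, ih]
    rfl

/-- If `(X,r)` is of class `m`, i.e. `σ_x ∘ σ_{D(x)} ∘ ⋯ ∘ σ_{D^{m-1}(x)} = id` for
every `x`, then `D^m = id`. -/
theorem D_iterate_eq_id_of_class {X : Type*} (S : YBSol X)
    (hnd : S.NonDeg) (hinv : S.Invol)
    (D : X → X) (hD : ∀ x, S.σ x (D x) = x)
    (m : ℕ) (hm : ∀ x y : X, sigIter S D m x y = y) :
    ∀ x : X, D^[m] x = x := by
  exact fun x => D_iterate_eq_id_of_class_general (g := S.σEnd) hD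
    ((sigIter_eq_prod_σEnd S D m x).symm.trans (funext (hm x)))
end

section
/- Let (X,r) be a non-degenerate involutive set-theoretic solution with structure group G(X,r), bijective 1-cocycle π : G(X,r) → ℤ^X, and D(x) = σ_x^{-1}(x). Then for every x ∈ X and every k ≥ 1, π(x·D(x)·D²(x)⋯D^{k-1}(x)) = k·t_x. In particular, if (X,r) is of class m, the frozen element θ_x = x·D(x)⋯D^{m-1}(x) satisfies π(θ_x) = m·t_x. -/
open scoped BigOperators

section Cocycle

open groupCohomology

variable {X G : Type*} [Monoid G]

theorem map_prod_iterate_of_isCocycle₁ {A : Type*} [AddCommGroup A] [DistribMulAction G A]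
    {f : G → A} (hf : IsCocycle₁ f) {s : X → G} {D : X → X}
    (hD : ∀ x, s x • f (s (D x)) = f (s x)) (x : X) (k : ℕ) :
    f ((List.range k).map fun i => s (D^[i] x)).prod = k • f (s x) := by
  induction k generalizing x with
  | zero => simpa using map_one_of_isCocycle₁ hf
  | succ k ih =>
    calc f ((List.range (k + 1)).map fun i => s (D^[i] x)).prod
        = f (s x * ((List.range k).map fun i => s (D^[i] (D x))).prod) := by
          rw [List.prod_range_succ']; rfl
      _ = s x • k • f (s (D x)) + f (s x) := by rw [hf, ih]
      _ = (k + 1) • f (s x) := by rw [smul_comm, hD, succ_nsmul]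

-- The permutation action `g • t_x = t_{g • x}` on `ℤ^X`.
attribute [local instance] Finsupp.comapDistribMulAction

theorem pi_of_frozen_general [MulAction G X] {π : G → X →₀ ℤ} (hπ : IsCocycle₁ π)
    {s : X → G} (hs : ∀ x, π (s x) = Finsupp.single x 1)
    {D : X → X} (hD : ∀ x, s x • D x = x) (x : X) (k : ℕ) :
    π ((List.range k).map fun i => s (D^[i] x)).prod = Finsupp.single x (k : ℤ) := by
  have hsD (y : X) : s y • π (s (D y)) = π (s y) := by
    rw [hs, hs, Finsupp.comapSMul_single, hD]
  rw [map_prod_iterate_of_isCocycle₁ hπ hsD, hs, Finsupp.smul_single, nsmul_one]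

end Cocycle

/-- `π(x·D(x)⋯D^{k-1}(x)) = k·t_x` for every `k ≥ 1`; in particular, if `(X,r)` is
of class `m`, the frozen element `θ_x = x·D(x)⋯D^{m-1}(x)` satisfies `π(θ_x) = m·t_x`. -/
theorem pi_of_frozen {X : Type*} (S : YBSol X)
    (hnd : S.NonDeg) (hinv : S.Invol)
    (φ : S.G →* Equiv.Perm X) (hφ : ∀ x y : X, φ (S.gen x) y = S.σ x y)
    (π : S.G → (X →₀ ℤ)) (hπbij : Function.Bijective π)
    (hπgen : ∀ x : X, π (S.gen x) = Finsupp.single x 1)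
    (hπcoc : ∀ g h : S.G, π (g * h) = π g + Finsupp.mapDomain (⇑(φ g)) (π h))
    (D : X → X) (hD : ∀ x, S.σ x (D x) = x)
    (m : ℕ) (θ : X → S.G)
    (hθ : ∀ x : X, θ x = (((List.range m).map fun i => S.gen (D^[i] x)).prod)) :
    (∀ (x : X) (k : ℕ), 1 ≤ k →
        π (((List.range k).map fun i => S.gen (D^[i] x)).prod) =
          Finsupp.single x (k : ℤ)) ∧
    ((∀ x y : X, sigIter S D m x y = y) →
        ∀ x : X, π (θ x) = Finsupp.single x (m : ℤ)) := by
  let _ : MulAction S.G X := MulAction.compHom X φ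
  have pi_prod := pi_of_frozen_general (fun g h => (hπcoc g h).trans (add_comm _ _)) hπgen
    fun x => (hφ x (D x)).trans (hD x)
  exact ⟨fun x k _ => pi_prod x k, fun _ x => hθ x ▸ pi_prod x m⟩
end

section
/- Let (X,r) be a non-degenerate involutive set-theoretic solution of class m, with structure group G(X,r), bijective 1-cocycle π : G(X,r) → ℤ^X, frozen elements θ_x (x ∈ X), and N the subgroup of G(X,r) generated by {θ_x : x ∈ X}. Then for all x_{i_1},…,x_{i_k} ∈ X and integers α_1,…,α_k, π(θ_{x_{i_1}}^{α_1} ⋯ θ_{x_{i_k}}^{α_k}) = m·∑_{j=1}^{k} α_j t_{x_{i_j}}; moreover, for g ∈ G(X,r), g ∈ N if and only if every coordinate of π(g) (in the basis {t_x}) is divisible by m. -/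
open scoped BigOperators

/-!
Let `K` be the kernel of the action of `G` on `ℤ^X`. The cocycle `π` restricts to a homomorphism
on `K`. Since `x • t_{D(x)} = t_x`, each letter of a frozen word contributes the same vector, so
`π(θ_x) = m t_x`, while class `m` says exactly that `θ_x ∈ K`. Hence `π` is a homomorphism on `N`
with image the subgroup generated by the vectors `m t_x`, and injectivity of `π` recovers `N` as
the preimage of this image.
-/

open groupCohomology

section Cocycle

variable {G A : Type*} [Group G] [AddCommGroup A] [DistribMulAction G A] {f : G → A}

theorem cocycle_mul_of_mem_ker (hf : IsCocycle₁ f) {g : G}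
    (hg : g ∈ (MulAction.toPermHom G A).ker) (h : G) : f (g * h) = f g + f h := by
  have smul_eq : g • f h = f h := Equiv.congr_fun hg (f h)
  rw [hf, smul_eq, add_comm]

/-- The restriction of a 1-cocycle `G → A` to the kernel of the action of `G` on `A`, where the
cocycle identity becomes additivity. The target is `Multiplicative A` so that the library's lemmas
on homomorphisms of multiplicative groups apply. -/
def cocycleKerHom (hf : IsCocycle₁ f) : (MulAction.toPermHom G A).ker →* Multiplicative A :=
  MonoidHom.mk' (fun g => Multiplicative.ofAdd (f g)) fun g h =>
    congrArg Multiplicative.ofAdd (cocycle_mul_of_mem_ker hf g.2 h)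

theorem cocycle_inv_of_mem_ker (hf : IsCocycle₁ f) {g : G}
    (hg : g ∈ (MulAction.toPermHom G A).ker) : f g⁻¹ = -f g :=
  congrArg Multiplicative.toAdd (map_inv (cocycleKerHom hf) ⟨g, hg⟩)

theorem cocycle_zpow_of_mem_ker (hf : IsCocycle₁ f) {g : G}
    (hg : g ∈ (MulAction.toPermHom G A).ker) (n : ℤ) : f (g ^ n) = n • f g :=
  congrArg Multiplicative.toAdd (map_zpow (cocycleKerHom hf) ⟨g, hg⟩ n)

theorem cocycle_list_prod_of_mem_ker (hf : IsCocycle₁ f) {l : List G}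
    (hl : ∀ g ∈ l, g ∈ (MulAction.toPermHom G A).ker) : f l.prod = (l.map f).sum := by
  induction l with
  | nil => exact map_one_of_isCocycle₁ hf
  | cons g l ih =>
    rw [List.forall_mem_cons] at hl
    rw [List.prod_cons, cocycle_mul_of_mem_ker hf hl.1, ih hl.2, List.map_cons, List.sum_cons]

theorem cocycle_prod_ofFn_zpow_of_mem_ker (hf : IsCocycle₁ f) {k : ℕ} {g : Fin k → G}
    (hg : ∀ j, g j ∈ (MulAction.toPermHom G A).ker) (α : Fin k → ℤ) :
    f (List.ofFn fun j => g j ^ α j).prod = ∑ j, α j • f (g j) := by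
  have factors_mem_ker : ∀ h ∈ List.ofFn fun j => g j ^ α j, h ∈ (MulAction.toPermHom G A).ker :=
    List.forall_mem_ofFn_iff.2 fun j => zpow_mem (hg j) (α j)
  rw [cocycle_list_prod_of_mem_ker hf factors_mem_ker, List.map_ofFn, List.sum_ofFn]
  exact Finset.sum_congr rfl fun j _ => cocycle_zpow_of_mem_ker hf (hg j) (α j)

theorem cocycle_image_closure_of_subset_ker (hf : IsCocycle₁ f) {s : Set G}
    (hs : s ⊆ (MulAction.toPermHom G A).ker) :
    f '' Subgroup.closure s = AddSubgroup.closure (f '' s) := by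
  have closure_le_ker : Subgroup.closure s ≤ (MulAction.toPermHom G A).ker :=
    (Subgroup.closure_le _).2 hs
  apply Set.Subset.antisymm
  · rintro _ ⟨g, hg, rfl⟩
    rw [SetLike.mem_coe]
    induction hg using Subgroup.closure_induction with
    | mem g hg => exact AddSubgroup.subset_closure (Set.mem_image_of_mem f hg)
    | one => simpa only [map_one_of_isCocycle₁ hf] using zero_mem _
    | mul g h hg _ ihg ihh =>
      simpa only [cocycle_mul_of_mem_ker hf (closure_le_ker hg)] using add_mem ihg ihh
    | inv g hg ihg =>
      simpa only [cocycle_inv_of_mem_ker hf (closure_le_ker hg)] using neg_mem ihg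
  · intro a ha
    induction ha using AddSubgroup.closure_induction with
    | mem a ha => exact Set.image_mono Subgroup.subset_closure ha
    | zero => exact ⟨1, one_mem _, map_one_of_isCocycle₁ hf⟩
    | add _ _ _ _ iha ihb =>
      obtain ⟨g, hg, rfl⟩ := iha
      obtain ⟨h, hh, rfl⟩ := ihb
      exact ⟨g * h, mul_mem hg hh, cocycle_mul_of_mem_ker hf (closure_le_ker hg) h⟩
    | neg _ _ iha =>
      obtain ⟨g, hg, rfl⟩ := iha
      exact ⟨g⁻¹, inv_mem hg, cocycle_inv_of_mem_ker hf (closure_le_ker hg)⟩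

theorem mem_closure_iff_cocycle_mem_closure (hf : IsCocycle₁ f) (hinj : Function.Injective f)
    {s : Set G} (hs : s ⊆ (MulAction.toPermHom G A).ker) {g : G} :
    g ∈ Subgroup.closure s ↔ f g ∈ AddSubgroup.closure (f '' s) := by
  rw [← SetLike.mem_coe, ← hinj.mem_set_image, cocycle_image_closure_of_subset_ker hf hs,
    SetLike.mem_coe]

end Cocycle

section Frozen

variable {X M : Type*} [Monoid M]

/-- The frozen element `x · D(x) ⋯ D^{k-1}(x)` of length `k` starting with `x`, where the letter
`x : X` is read in the monoid `M` as `gen x`. -/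
def frozen (gen : X → M) (D : X → X) (k : ℕ) (x : X) : M :=
  ((List.range k).map fun i => gen (D^[i] x)).prod

theorem frozen_zero (gen : X → M) (D : X → X) (x : X) : frozen gen D 0 x = 1 :=
  rfl

theorem frozen_succ (gen : X → M) (D : X → X) (k : ℕ) (x : X) :
    frozen gen D (k + 1) x = gen x * frozen gen D k (D x) := by
  simp only [frozen, List.range_succ_eq_map, List.map_cons, List.map_map, List.prod_cons,
    Function.comp_def, Function.iterate_succ_apply, Function.iterate_zero_apply]

theorem map_frozen_apply_eq_sigIter (S : YBSol X) {gen : X → M}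
    {φ : M →* Equiv.Perm X} (hφ : ∀ x y, φ (gen x) y = S.σ x y) (D : X → X) (k : ℕ) (x y : X) :
    φ (frozen gen D k x) y = sigIter S D k x y := by
  induction k generalizing x with
  | zero => rw [frozen_zero, map_one]; rfl
  | succ k ih => rw [frozen_succ, map_mul, Equiv.Perm.mul_apply, ih, hφ]; rfl

theorem cocycle_frozen {G A : Type*} [Group G] [AddCommGroup A] [DistribMulAction G A]
    {f : G → A} (hf : IsCocycle₁ f) {gen : X → G} {D : X → X}
    (hD : ∀ x, gen x • f (gen (D x)) = f (gen x)) (k : ℕ) (x : X) :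
    f (frozen gen D k x) = k • f (gen x) := by
  induction k generalizing x with
  | zero => rw [frozen_zero, map_one_of_isCocycle₁ hf, zero_smul]
  | succ k ih => rw [frozen_succ, hf, ih, smul_comm, hD, succ_nsmul]

end Frozen

theorem mem_ker_toPermHom_finsupp {G X A : Type*} [Group G] [MulAction G X] [AddCommMonoid A]
    {g : G} (hg : g ∈ (MulAction.toPermHom G X).ker) :
    letI : DistribMulAction G (X →₀ A) := Finsupp.comapDistribMulAction
    g ∈ (MulAction.toPermHom G (X →₀ A)).ker := by
  have smul_eq_id : (g • · : X → X) = id := funext (Equiv.congr_fun hg)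
  refine Equiv.ext fun v => ?_
  change Finsupp.mapDomain (g • ·) v = v
  rw [smul_eq_id, Finsupp.mapDomain_id]

theorem mem_span_range_single_iff_forall_dvd {ι R : Type*} [CommSemiring R] {a : R}
    {v : ι →₀ R} :
    v ∈ Submodule.span R (Set.range fun i => Finsupp.single i a) ↔ ∀ i, a ∣ v i := by
  constructor
  · intro hv i
    induction hv using Submodule.span_induction with
    | mem _ hv =>
      obtain ⟨j, rfl⟩ := hv
      classical
      rw [Finsupp.single_apply]
      split_ifs
      exacts [dvd_rfl, dvd_zero a]
    | zero => exact dvd_zero a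
    | add _ _ _ _ ihv ihw => exact dvd_add ihv ihw
    | smul c _ _ ihv => exact ihv.mul_left c
  · intro hdvd
    rw [← Finsupp.sum_single v]
    refine Submodule.sum_mem _ fun i _ => ?_
    obtain ⟨c, hc⟩ := hdvd i
    have single_eq : Finsupp.single i (v i) = c • Finsupp.single i a := by
      rw [Finsupp.smul_single, smul_eq_mul, hc, mul_comm]
    rw [single_eq]
    exact Submodule.smul_mem _ c (Submodule.subset_span (Set.mem_range_self i))

/-- `π(θ_{i_1}^{α_1} ⋯ θ_{i_k}^{α_k}) = m·∑ α_j t_{i_j}`, and `g ∈ N` iff every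
coordinate of `π(g)` is divisible by `m`. -/
theorem pi_of_N {X : Type*} (S : YBSol X)
    (hnd : S.NonDeg) (hinv : S.Invol)
    (φ : S.G →* Equiv.Perm X) (hφ : ∀ x y : X, φ (S.gen x) y = S.σ x y)
    (π : S.G → (X →₀ ℤ)) (hπbij : Function.Bijective π)
    (hπgen : ∀ x : X, π (S.gen x) = Finsupp.single x 1)
    (hπcoc : ∀ g h : S.G, π (g * h) = π g + Finsupp.mapDomain (⇑(φ g)) (π h))
    (D : X → X) (hD : ∀ x, S.σ x (D x) = x)
    (m : ℕ) (hm : ∀ x y : X, sigIter S D m x y = y)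
    (θ : X → S.G)
    (hθ : ∀ x : X, θ x = (((List.range m).map fun i => S.gen (D^[i] x)).prod)) :
    (∀ (k : ℕ) (xs : Fin k → X) (α : Fin k → ℤ),
        π ((List.ofFn fun j => θ (xs j) ^ α j).prod) =
          ∑ j : Fin k, Finsupp.single (xs j) ((m : ℤ) * α j)) ∧
    (∀ g : S.G, g ∈ Subgroup.closure (Set.range θ) ↔ ∀ x : X, (m : ℤ) ∣ π g x) := by
  let : MulAction S.G X := MulAction.compHom X φ
  let : DistribMulAction S.G (X →₀ ℤ) := Finsupp.comapDistribMulAction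
  have cocycle : IsCocycle₁ π := fun g h => (hπcoc g h).trans (add_comm _ _)
  obtain rfl : θ = frozen S.gen D m := funext hθ
  have frozen_mem_ker (x : X) : frozen S.gen D m x ∈ (MulAction.toPermHom S.G (X →₀ ℤ)).ker :=
    mem_ker_toPermHom_finsupp <| Equiv.ext fun y =>
      (map_frozen_apply_eq_sigIter S hφ D m x y).trans (hm x y)
  have gen_smul (x : X) : S.gen x • π (S.gen (D x)) = π (S.gen x) := by
    have gen_smul_D : S.gen x • D x = x := (hφ x (D x)).trans (hD x)
    rw [hπgen, hπgen, Finsupp.comapSMul_single, gen_smul_D]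
  have π_frozen (x : X) : π (frozen S.gen D m x) = Finsupp.single x (m : ℤ) := by
    rw [cocycle_frozen cocycle gen_smul, hπgen, Finsupp.smul_single, nsmul_one]
  refine ⟨fun k xs α => ?_, fun g => ?_⟩
  · simp only [cocycle_prod_ofFn_zpow_of_mem_ker cocycle (fun j => frozen_mem_ker (xs j)),
      π_frozen, Finsupp.smul_single, smul_eq_mul, mul_comm]
  · rw [mem_closure_iff_cocycle_mem_closure cocycle hπbij.1 (Set.range_subset_iff.2 frozen_mem_ker),
      ← Set.range_comp, ← mem_span_range_single_iff_forall_dvd,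
      ← Submodule.mem_toAddSubgroup, Submodule.span_int_eq_addSubgroupClosure]
    simp only [Function.comp_def, π_frozen]
end

section
/- Let (X,r) be a non-degenerate involutive set-theoretic solution of class m, with structure group G(X,r), homomorphism φ : G(X,r) → Sym(X), bijective 1-cocycle π : G(X,r) → ℤ^X, and N the subgroup generated by the frozen elements θ_x. If u ∈ Ker(φ), v ∈ G(X,r), and w ∈ G(X,r) satisfies N·w = N·u·v (i.e., w lies in the coset N·u·v), then every coordinate of π(w) − π(u) − π(v) in the basis {t_x} is divisible by m. -/
open scoped BigOperators

/-!
On `Ker φ` the cocycle `π` is additive, so the elements of `Ker φ` that `π` sends into a given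
subgroup `B` of `ℤ^X` form a subgroup of the structure group. Since `σ_x` moves `t_{D(x)}` to `t_x`,
the cocycle rule telescopes to `π(θ_x) = m t_x`; hence for `B = m ℤ^X` that subgroup contains `N`.
For `w = g u v` with `g ∈ N` the difference `π(w) - π(u) - π(v)` is just `π(g)`.
-/

section FrozenProd

variable {X M : Type*} [Monoid M]

/-- The product `f(x) · f(D(x)) ⋯ f(D^{k-1}(x))` along the `D`-orbit of `x`. For `f` the map
from `X` to the structure group it is the frozen element of length `k` starting with `x`. -/
def frozenProd (f : X → M) (D : X → X) (k : ℕ) (x : X) : M :=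
  ((List.range k).map fun i => f (D^[i] x)).prod

theorem frozenProd_zero (f : X → M) (D : X → X) (x : X) : frozenProd f D 0 x = 1 :=
  rfl

theorem frozenProd_succ (f : X → M) (D : X → X) (k : ℕ) (x : X) :
    frozenProd f D (k + 1) x = f x * frozenProd f D k (D x) :=
  List.prod_range_succ' _ k

theorem map_frozenProd_apply_eq_sigIter {S : YBSol X} {φ : M →* Equiv.Perm X} {f : X → M}
    (hφ : ∀ x y, φ (f x) y = S.σ x y) (D : X → X) (k : ℕ) (x y : X) :
    φ (frozenProd f D k x) y = sigIter S D k x y := by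
  induction k generalizing x with
  | zero => rw [frozenProd_zero, map_one, Equiv.Perm.one_apply, sigIter, id]
  | succ k ih =>
    rw [frozenProd_succ, map_mul, Equiv.Perm.mul_apply, ih, hφ, sigIter, Function.comp_apply]

theorem frozenProd_mem_ker_of_sigIter {G : Type*} [Group G] {S : YBSol X}
    {φ : G →* Equiv.Perm X} {f : X → G} (hφ : ∀ x y, φ (f x) y = S.σ x y) {D : X → X} {m : ℕ}
    (hm : ∀ x y, sigIter S D m x y = y) (x : X) :
    frozenProd f D m x ∈ φ.ker :=
  MonoidHom.mem_ker.mpr <| Equiv.ext fun y =>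
    (map_frozenProd_apply_eq_sigIter hφ D m x y).trans (hm x y)

end FrozenProd

/-- `π` is a 1-cocycle of `G` with values in the permutation module `A^(X)`, on which `G` acts
through `φ : G → Sym(X)`. -/
def IsPermCocycle {G X A : Type*} [Group G] [AddCommMonoid A] (φ : G →* Equiv.Perm X)
    (π : G → X →₀ A) : Prop :=
  ∀ g h : G, π (g * h) = π g + Finsupp.mapDomain (φ g) (π h)

namespace IsPermCocycle

variable {G X A : Type*} [Group G] [AddCommGroup A] {φ : G →* Equiv.Perm X} {π : G → X →₀ A}

theorem map_mul_of_mem_ker (hπ : IsPermCocycle φ π) {g : G} (hg : g ∈ φ.ker) (h : G) :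
    π (g * h) = π g + π h := by
  rw [hπ, MonoidHom.mem_ker.mp hg, Equiv.Perm.coe_one, Finsupp.mapDomain_id]

theorem map_one (hπ : IsPermCocycle φ π) : π 1 = 0 := by
  simpa using hπ.map_mul_of_mem_ker φ.ker.one_mem 1

theorem map_inv_of_mem_ker (hπ : IsPermCocycle φ π) {g : G} (hg : g ∈ φ.ker) :
    π g⁻¹ = -π g := by
  refine eq_neg_of_add_eq_zero_right ?_
  rw [← hπ.map_mul_of_mem_ker hg, mul_inv_cancel, hπ.map_one]

/-- The subgroup of those elements of `Ker φ` whose value under the cocycle `π` lies in `B`. -/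
def kerComap (hπ : IsPermCocycle φ π) (B : AddSubgroup (X →₀ A)) : Subgroup G where
  carrier := {g | g ∈ φ.ker ∧ π g ∈ B}
  one_mem' := ⟨φ.ker.one_mem, hπ.map_one ▸ B.zero_mem⟩
  mul_mem' := fun ⟨hg, hgB⟩ ⟨hh, hhB⟩ =>
    ⟨φ.ker.mul_mem hg hh, hπ.map_mul_of_mem_ker hg _ ▸ B.add_mem hgB hhB⟩
  inv_mem' := fun ⟨hg, hgB⟩ => ⟨φ.ker.inv_mem hg, hπ.map_inv_of_mem_ker hg ▸ B.neg_mem hgB⟩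

theorem map_frozenProd_eq_single (hπ : IsPermCocycle φ π) {f : X → G} {a : A}
    (hf : ∀ x, π (f x) = Finsupp.single x a) {D : X → X} (hD : ∀ x, φ (f x) (D x) = x)
    (k : ℕ) (x : X) : π (frozenProd f D k x) = Finsupp.single x (k • a) := by
  induction k generalizing x with
  | zero => rw [frozenProd_zero, hπ.map_one, zero_smul, Finsupp.single_zero]
  | succ k ih =>
    rw [frozenProd_succ, hπ, ih, hf, Finsupp.mapDomain_single, hD, ← Finsupp.single_add,
      succ_nsmul']

theorem closure_frozenProd_le_kerComap (hπ : IsPermCocycle φ π) {f : X → G} {a : A}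
    (hf : ∀ x, π (f x) = Finsupp.single x a) {D : X → X} (hD : ∀ x, φ (f x) (D x) = x)
    {m : ℕ} (hm : ∀ x, frozenProd f D m x ∈ φ.ker) :
    Subgroup.closure (Set.range (frozenProd f D m)) ≤
      hπ.kerComap (nsmulAddMonoidHom m).range := by
  rw [Subgroup.closure_le]
  rintro _ ⟨x, rfl⟩
  refine ⟨hm x, Finsupp.single x a, ?_⟩
  rw [nsmulAddMonoidHom_apply, Finsupp.smul_single, hπ.map_frozenProd_eq_single hf hD]

end IsPermCocycle

theorem coset_representative_coords_general {G X : Type*} [Group G] {φ : G →* Equiv.Perm X}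
    {π : G → X →₀ ℤ} (hπ : IsPermCocycle φ π) {f : X → G}
    (hf : ∀ x, π (f x) = Finsupp.single x 1) {D : X → X} (hD : ∀ x, φ (f x) (D x) = x)
    {m : ℕ} (hm : ∀ x, frozenProd f D m x ∈ φ.ker) {u v w : G} (hu : u ∈ φ.ker)
    (hw : ∃ g ∈ Subgroup.closure (Set.range (frozenProd f D m)), w = g * (u * v)) (x : X) :
    (m : ℤ) ∣ (π w - π u - π v) x := by
  obtain ⟨g, hg, rfl⟩ := hw
  obtain ⟨hgker, b, hb⟩ := hπ.closure_frozenProd_le_kerComap hf hD hm hg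
  have hdiff : π (g * (u * v)) - π u - π v = m • b := by
    rw [hπ.map_mul_of_mem_ker hgker, hπ.map_mul_of_mem_ker hu, ← hb, nsmulAddMonoidHom_apply]
    abel
  exact ⟨b x, by rw [hdiff, Finsupp.smul_apply, nsmul_eq_mul]⟩

/-- If `u ∈ Ker(φ)` and `w` lies in the coset `N·u·v`, then every coordinate of
`π(w) − π(u) − π(v)` is divisible by `m`. -/
theorem coset_representative_coords {X : Type*} (S : YBSol X)
    (hnd : S.NonDeg) (hinv : S.Invol)
    (φ : S.G →* Equiv.Perm X) (hφ : ∀ x y : X, φ (S.gen x) y = S.σ x y)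
    (π : S.G → (X →₀ ℤ)) (hπbij : Function.Bijective π)
    (hπgen : ∀ x : X, π (S.gen x) = Finsupp.single x 1)
    (hπcoc : ∀ g h : S.G, π (g * h) = π g + Finsupp.mapDomain (⇑(φ g)) (π h))
    (D : X → X) (hD : ∀ x, S.σ x (D x) = x)
    (m : ℕ) (hm : ∀ x y : X, sigIter S D m x y = y)
    (θ : X → S.G)
    (hθ : ∀ x : X, θ x = (((List.range m).map fun i => S.gen (D^[i] x)).prod))
    (u v w : S.G) (hu : u ∈ φ.ker)
    (hw : ∃ g ∈ Subgroup.closure (Set.range θ), w = g * (u * v)) :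
    ∀ x : X, (m : ℤ) ∣ (π w - π u - π v) x := by
  obtain rfl : θ = frozenProd S.gen D m := funext hθ
  exact coset_representative_coords_general hπcoc hπgen (fun x => (hφ x _).trans (hD x))
    (frozenProd_mem_ker_of_sigIter hφ hm) hu hw
end

section
/- Let (X,r) be a non-degenerate involutive set-theoretic solution with X = {x_1,…,x_n} finite, of class m, with structure group G(X,r), maps φ and π, matrix representation ψ : G(X,r) → GL_{n+1}(ℝ), frozen elements θ_{x_i}, and N the subgroup generated by the frozen elements. If g = h·s with h ∈ N and s ∈ G(X,r), then there exist integers α_1,…,α_n such that ψ(g) = ψ(s) + m·∑_{i=1}^{n} α_i E_i; equivalently, φ(g) = φ(s) and π(g) − π(s) = m·∑_{i=1}^{n} α_i t_{x_i}. -/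
open scoped BigOperators

section Mat

/-- The `(n+1) × (n+1)` real matrix with the permutation matrix of `p` in the upper-left
`n × n` block, the vector `v` in the first `n` entries of the last column, and last
row `(0,…,0,1)`. -/
noncomputable def matOf {n : ℕ} (p : Equiv.Perm (Fin n)) (v : Fin n → ℤ) :
    Matrix (Fin (n + 1)) (Fin (n + 1)) ℝ :=
  Matrix.of fun i j =>
    if hi : (i : ℕ) < n then
      if hj : (j : ℕ) < n then (if p ⟨j, hj⟩ = ⟨i, hi⟩ then (1 : ℝ) else 0)
      else ((v ⟨i, hi⟩ : ℤ) : ℝ)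
    else if (j : ℕ) < n then 0 else 1

/-- `E_k`: the `(n+1) × (n+1)` matrix with entry `1` in position `(k, n+1)` and `0` elsewhere. -/
noncomputable def EMat (n : ℕ) (k : Fin n) : Matrix (Fin (n + 1)) (Fin (n + 1)) ℝ :=
  Matrix.single (Fin.castSucc k) (Fin.last n) 1

end Mat

/-!
On the kernel of `φ` the cocycle `π` is an additive homomorphism, because there the twist by the
permutation action disappears. A frozen word of length `k` starting with `x` satisfies `π = k tₓ`:
since `σ_x (D x) = x`, each further letter of the word contributes another `tₓ`. In length `m` the
class condition puts the word into `ker φ`, so `π` maps all of `N` into the lattice `m ℤ^X`. Finally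
`ψ` is affine in its last column.
-/

section PermutationCocycle

variable {G X A : Type*} [Group G] [AddCommGroup A] {φ : G →* Equiv.Perm X} {π : G → X →₀ A}

/-- `π` is a 1-cocycle of `G` with values in the permutation module `X →₀ A`, on which `G` acts
through `φ` by permuting the basis. -/
def IsPermutationCocycle (φ : G →* Equiv.Perm X) (π : G → X →₀ A) : Prop :=
  ∀ g h : G, π (g * h) = π g + Finsupp.mapDomain (φ g) (π h)

namespace IsPermutationCocycle

theorem map_mul_of_map_eq_one (hπ : IsPermutationCocycle φ π) {g : G} (hg : φ g = 1) (h : G) :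
    π (g * h) = π g + π h := by
  rw [hπ, hg, Equiv.Perm.coe_one, Finsupp.mapDomain_id]

protected theorem map_one (hπ : IsPermutationCocycle φ π) : π 1 = 0 := by
  simpa using hπ.map_mul_of_map_eq_one (map_one φ) 1

theorem map_inv_of_map_eq_one (hπ : IsPermutationCocycle φ π) {g : G} (hg : φ g = 1) :
    π g⁻¹ = -π g := by
  refine eq_neg_of_add_eq_zero_right ?_
  rw [← hπ.map_mul_of_map_eq_one hg, mul_inv_cancel, hπ.map_one]

/-- The preimage of a subgroup `L` of `X →₀ A` under the restriction of the cocycle `π` to the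
kernel of `φ`, regarded as a subgroup of `G`. -/
def kerComap (hπ : IsPermutationCocycle φ π) (L : AddSubgroup (X →₀ A)) : Subgroup G where
  carrier := {g | φ g = 1 ∧ π g ∈ L}
  one_mem' := ⟨map_one φ, hπ.map_one ▸ L.zero_mem⟩
  mul_mem' := fun ⟨hφg, hπg⟩ ⟨hφh, hπh⟩ =>
    ⟨by rw [map_mul, hφg, hφh, one_mul],
      hπ.map_mul_of_map_eq_one hφg _ ▸ L.add_mem hπg hπh⟩
  inv_mem' := fun ⟨hφg, hπg⟩ =>
    ⟨by rw [map_inv, hφg, inv_one], hπ.map_inv_of_map_eq_one hφg ▸ L.neg_mem hπg⟩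

end IsPermutationCocycle

end PermutationCocycle

namespace YBSol

variable {X : Type*} (S : YBSol X)

/-- The frozen word `x · D(x) ⋯ D^{k-1}(x)` of length `k` starting with `x`, as an element of the
structure group. For a solution of class `m` it is `θ_x` when `k = m`. -/
def frozen (D : X → X) (k : ℕ) (x : X) : S.G :=
  ((List.range k).map fun i => S.gen (D^[i] x)).prod

variable {S} {D : X → X} {φ : S.G →* Equiv.Perm X} {π : S.G → X →₀ ℤ}

theorem frozen_zero (x : X) : S.frozen D 0 x = 1 := rfl

theorem frozen_succ (k : ℕ) (x : X) : S.frozen D (k + 1) x = S.gen x * S.frozen D k (D x) := by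
  simp only [frozen, List.range_succ_eq_map, List.map_cons, List.prod_cons, List.map_map,
    Function.iterate_zero_apply, Function.comp_def, Function.iterate_succ_apply]

theorem map_frozen_apply (hφ : ∀ x y, φ (S.gen x) y = S.σ x y) (k : ℕ) (x y : X) :
    φ (S.frozen D k x) y = sigIter S D k x y := by
  induction k generalizing x with
  | zero => rw [frozen_zero, map_one, Equiv.Perm.one_apply, sigIter, id]
  | succ k ih => rw [frozen_succ, map_mul, Equiv.Perm.mul_apply, ih, hφ, sigIter, Function.comp]

theorem cocycle_frozen (hφ : ∀ x y, φ (S.gen x) y = S.σ x y) (hπ : IsPermutationCocycle φ π)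
    (hπgen : ∀ x, π (S.gen x) = Finsupp.single x 1) (hD : ∀ x, S.σ x (D x) = x) (k : ℕ) (x : X) :
    π (S.frozen D k x) = Finsupp.single x (k : ℤ) := by
  induction k generalizing x with
  | zero => rw [frozen_zero, hπ.map_one, Nat.cast_zero, Finsupp.single_zero]
  | succ k ih =>
    calc π (S.frozen D (k + 1) x)
      _ = π (S.gen x) + Finsupp.mapDomain (φ (S.gen x)) (π (S.frozen D k (D x))) := by
        rw [frozen_succ, hπ]
      _ = Finsupp.single x 1 + Finsupp.single x (k : ℤ) := by
        rw [hπgen, ih, Finsupp.mapDomain_single, hφ, hD]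
      _ = Finsupp.single x ((k + 1 : ℕ) : ℤ) := by
        rw [← Finsupp.single_add, Nat.cast_succ, add_comm]

theorem closure_frozen_le_kerComap (hφ : ∀ x y, φ (S.gen x) y = S.σ x y)
    (hπ : IsPermutationCocycle φ π) (hπgen : ∀ x, π (S.gen x) = Finsupp.single x 1)
    (hD : ∀ x, S.σ x (D x) = x) {m : ℕ} (hm : ∀ x y, sigIter S D m x y = y) :
    Subgroup.closure (Set.range (S.frozen D m)) ≤
      hπ.kerComap (nsmulAddMonoidHom m : (X →₀ ℤ) →+ (X →₀ ℤ)).range := by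
  rw [Subgroup.closure_le]
  rintro _ ⟨x, rfl⟩
  refine ⟨Equiv.ext fun y => ?_, Finsupp.single x 1, ?_⟩
  · rw [map_frozen_apply hφ, hm, Equiv.Perm.one_apply]
  · rw [cocycle_frozen hφ hπ hπgen hD, nsmulAddMonoidHom_apply, Finsupp.smul_single, nsmul_one]

theorem map_eq_and_exists_cocycle_eq_add_nsmul (hφ : ∀ x y, φ (S.gen x) y = S.σ x y)
    (hπ : IsPermutationCocycle φ π) (hπgen : ∀ x, π (S.gen x) = Finsupp.single x 1)
    (hD : ∀ x, S.σ x (D x) = x) {m : ℕ} (hm : ∀ x y, sigIter S D m x y = y) {h : S.G}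
    (hh : h ∈ Subgroup.closure (Set.range (S.frozen D m))) (s : S.G) :
    φ (h * s) = φ s ∧ ∃ a : X →₀ ℤ, π (h * s) = π s + m • a := by
  obtain ⟨hφh, a, ha⟩ := closure_frozen_le_kerComap hφ hπ hπgen hD hm hh
  refine ⟨by rw [map_mul, hφh, one_mul], a, ?_⟩
  rw [hπ.map_mul_of_map_eq_one hφh, ← ha, nsmulAddMonoidHom_apply, add_comm]

end YBSol

theorem matOf_add {n : ℕ} (p : Equiv.Perm (Fin n)) (v w : Fin n → ℤ) :
    matOf p (v + w) = matOf p v + ∑ k, (w k : ℝ) • EMat n k := by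
  ext i j
  simp only [matOf, EMat, Matrix.add_apply, Matrix.sum_apply, Matrix.smul_apply, Matrix.of_apply,
    Matrix.single_apply]
  cases i using Fin.lastCases with
  | last => simp
  | cast i =>
    cases j using Fin.lastCases with
    | last => simp
    | cast j => simp [(Fin.castSucc_ne_last j).symm]

/-- If `g = h·s` with `h ∈ N`, then `ψ(g) = ψ(s) + m·∑ αᵢ Eᵢ` for some integers `αᵢ`;
equivalently `φ(g) = φ(s)` and `π(g) − π(s) = m·∑ αᵢ tᵢ`. -/
theorem psi_of_coset_of_N (n : ℕ) (S : YBSol (Fin n))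
    (hnd : S.NonDeg) (hinv : S.Invol)
    (φ : S.G →* Equiv.Perm (Fin n)) (hφ : ∀ x y : Fin n, φ (S.gen x) y = S.σ x y)
    (π : S.G → (Fin n →₀ ℤ)) (hπbij : Function.Bijective π)
    (hπgen : ∀ x : Fin n, π (S.gen x) = Finsupp.single x 1)
    (hπcoc : ∀ g h : S.G, π (g * h) = π g + Finsupp.mapDomain (⇑(φ g)) (π h))
    (D : Fin n → Fin n) (hD : ∀ x, S.σ x (D x) = x)
    (m : ℕ) (hm : ∀ x y : Fin n, sigIter S D m x y = y)
    (θ : Fin n → S.G)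
    (hθ : ∀ x : Fin n, θ x = (((List.range m).map fun i => S.gen (D^[i] x)).prod))
    (M : S.G → Matrix (Fin (n + 1)) (Fin (n + 1)) ℝ)
    (hM : ∀ g : S.G, M g = matOf (φ g) (fun i => π g i))
    (g h s : S.G) (hh : h ∈ Subgroup.closure (Set.range θ)) (hg : g = h * s) :
    ∃ α : Fin n → ℤ,
      M g = M s + ∑ i : Fin n, ((m : ℝ) * (α i : ℝ)) • EMat n i ∧
      φ g = φ s ∧
      π g = π s + ∑ i : Fin n, Finsupp.single i ((m : ℤ) * α i) := by
  obtain rfl : θ = S.frozen D m := funext hθ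
  subst hg
  obtain ⟨hφg, a, hπg⟩ := YBSol.map_eq_and_exists_cocycle_eq_add_nsmul hφ hπcoc hπgen hD hm hh s
  refine ⟨a, ?_, hφg, ?_⟩
  · have hcoord : (fun i => π (h * s) i) = ⇑(π s) + fun i => (m : ℤ) * a i := by
      ext i
      simp [hπg]
    rw [hM, hM, hφg, hcoord, matOf_add]
    simp only [Int.cast_mul, Int.cast_natCast]
  · rw [hπg, ← Finsupp.univ_sum_single (m • a)]
    simp only [Finsupp.smul_apply, nsmul_eq_mul]
end

section
/- Let (X,r) be a finite non-degenerate involutive set-theoretic solution of the Yang–Baxter equation and let D : X → X be defined by D(x) = σ_x^{-1}(x). Then there exists a natural number m ≥ 1 such that σ_x ∘ σ_{D(x)} ∘ σ_{D²(x)} ∘ ⋯ ∘ σ_{D^{m-1}(x)} = id_X for every x ∈ X (i.e., every finite non-degenerate involutive solution has a finite class). -/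
open scoped BigOperators

/-!
The product of the `σ`'s along the first `k` points of a `D`-orbit is a cocycle over `D`, so after a
period of `D` it just gets raised to powers. Involutivity of `r` forces `γ_{D(x)}(x) = D(x)`, so `D`
is injective, and on a finite set some `D^n` with `n ≥ 1` is the identity; `m` can be taken to be
`n` times the exponent of the symmetric group of `X`.
-/

section OrbitProd

variable {X M : Type*} [Monoid M]

/-- The ordered product `g x * g (D x) * ⋯ * g (D^[k-1] x)` along the orbit of `x` under `D`: a
non-commutative Birkhoff product. The factors are peeled off from the left, as in `sigIter`. -/
def orbitProd (g : X → M) (D : X → X) : ℕ → X → M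
  | 0, _ => 1
  | k + 1, x => g x * orbitProd g D k (D x)

theorem orbitProd_add (g : X → M) (D : X → X) (k l : ℕ) (x : X) :
    orbitProd g D (k + l) x = orbitProd g D k x * orbitProd g D l (D^[k] x) := by
  induction k generalizing x with
  | zero => simp [orbitProd]
  | succ k ih =>
    rw [Nat.add_right_comm, orbitProd, ih, orbitProd, mul_assoc, Function.iterate_succ_apply]

variable {D : X → X}

theorem orbitProd_mul_of_isPeriodicPt (g : X → M) {n : ℕ} {x : X}
    (hx : Function.IsPeriodicPt D n x) (k : ℕ) :
    orbitProd g D (n * k) x = orbitProd g D n x ^ k := by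
  induction k with
  | zero => simp [orbitProd]
  | succ k ih => rw [Nat.mul_succ, orbitProd_add, ih, (hx.mul_const k).eq, pow_succ]

theorem exists_pos_forall_orbitProd_eq_one [Finite X] (hM : Monoid.ExponentExists M)
    (g : X → M) (hD : Function.Injective D) :
    ∃ m, 0 < m ∧ ∀ x, orbitProd g D m x = 1 := by
  have := Fintype.ofFinite X
  obtain ⟨e, he, hpow⟩ := hM
  refine ⟨(Fintype.card X).factorial * e, Nat.mul_pos (Nat.factorial_pos _) he, fun x => ?_⟩
  have hx : Function.IsPeriodicPt D (Fintype.card X).factorial x :=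
    Function.isPeriodicPt_factorial_card_of_mem_periodicPts (hD.mem_periodicPts x)
  rw [orbitProd_mul_of_isPeriodicPt g hx, hpow]

end OrbitProd

section InvolutiveMap

variable {X : Type*} {σ : X → Equiv.Perm X} {γ : X → X → X} {D : X → X}

theorem gamma_diag_eq_diag (hr : Function.Involutive fun p : X × X => (σ p.1 p.2, γ p.2 p.1))
    (hD : ∀ x, σ x (D x) = x) (x : X) : γ (D x) x = D x := by
  have hrr : σ (σ x (D x)) (γ (D x) x) = x := congrArg Prod.fst (hr (x, D x))
  rw [hD] at hrr
  exact (σ x).injective (hrr.trans (hD x).symm)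

theorem diag_injective (hr : Function.Involutive fun p : X × X => (σ p.1 p.2, γ p.2 p.1))
    (hγ : ∀ y, Function.Injective (γ y)) (hD : ∀ x, σ x (D x) = x) :
    Function.Injective D := by
  intro x y hxy
  apply hγ (D x)
  calc γ (D x) x = D x := gamma_diag_eq_diag hr hD x
    _ = D y := hxy
    _ = γ (D y) y := (gamma_diag_eq_diag hr hD y).symm
    _ = γ (D x) y := by rw [hxy]

end InvolutiveMap

theorem exists_finite_class_general {X : Type*} [Finite X] (σ : X → Equiv.Perm X) (γ : X → X → X)
    (hr : Function.Involutive fun p : X × X => (σ p.1 p.2, γ p.2 p.1))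
    (hγ : ∀ y, Function.Injective (γ y))
    (D : X → X) (hD : ∀ x, σ x (D x) = x) :
    ∃ m : ℕ, 1 ≤ m ∧ ∀ x, orbitProd σ D m x = 1 :=
  exists_pos_forall_orbitProd_eq_one .of_finite σ (diag_injective hr hγ hD)

section SigmaPerm

variable {X : Type*} {S : YBSol X}

/-- The map `σ_x` of a non-degenerate solution as a permutation of `X`, so that composites of such
maps become products in the symmetric group. -/
noncomputable def YBSol.NonDeg.sigmaPerm (hnd : S.NonDeg) (x : X) : Equiv.Perm X :=
  Equiv.ofBijective (S.σ x) (hnd.1 x)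

theorem YBSol.NonDeg.sigIter_eq_orbitProd (hnd : S.NonDeg) (D : X → X) (k : ℕ) (x : X) :
    sigIter S D k x = orbitProd hnd.sigmaPerm D k x := by
  induction k generalizing x with
  | zero => rfl
  | succ k ih => rw [sigIter, ih, orbitProd, Equiv.Perm.coe_mul]; rfl

end SigmaPerm

/-- Every finite non-degenerate involutive solution has a finite class: there is
`m ≥ 1` with `σ_x ∘ σ_{D(x)} ∘ ⋯ ∘ σ_{D^{m-1}(x)} = id` for every `x`. -/
theorem exists_finite_class {X : Type*} [Finite X] (S : YBSol X)
    (hnd : S.NonDeg) (hinv : S.Invol)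
    (D : X → X) (hD : ∀ x, S.σ x (D x) = x) :
    ∃ m : ℕ, 1 ≤ m ∧ ∀ x y : X, sigIter S D m x y = y := by
  obtain ⟨m, hm, hprod⟩ := exists_finite_class_general hnd.sigmaPerm S.γ
    (congrFun hinv) (fun y => (hnd.2 y).injective) D hD
  exact ⟨m, hm, fun x y => by rw [hnd.sigIter_eq_orbitProd, hprod, Equiv.Perm.one_apply]⟩
end

section
/- Let G be a left brace and define λ_a(b) = a·b − a. Then the socle Soc(G) = {a ∈ G : λ_a = id_G} equals {a ∈ G : a·b = a + b for all b ∈ G}, and Soc(G) is an ideal of G: it is a normal subgroup of the multiplicative group (G,·), and λ_b(a) ∈ Soc(G) for every b ∈ G and a ∈ Soc(G). -/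
/-!
The map `a ↦ λ_a` is a homomorphism from `(G, ·)` to the endomorphisms of `(G, +)`, and `Soc(G)` is
its kernel, hence a normal subgroup. For `a ∈ Soc(G)` one has `λ_b(a) = b · a · b⁻¹`, so normality
also gives invariance under every `λ_b`.
-/

/-- The compatibility axiom of a left brace, as a mixin on a type that carries the additive and the
multiplicative group structures separately. -/
class IsLeftBrace (G : Type*) [AddCommGroup G] [Group G] : Prop where
  mul_add_eq (a b c : G) : a * (b + c) = a * b + a * c - a

namespace IsLeftBrace

variable {G : Type*} [AddCommGroup G] [Group G] [IsLeftBrace G]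

/-- The map `λ_a : b ↦ a * b - a`, as an endomorphism of the additive group. -/
def lambda (a : G) : AddMonoid.End G :=
  AddMonoidHom.mk' (fun b ↦ a * b - a) fun b c ↦ by
    rw [mul_add_eq]
    abel

theorem lambda_apply (a b : G) : lambda a b = a * b - a :=
  rfl

variable (G) in
theorem one_eq_zero : (1 : G) = 0 := by
  have h : lambda (1 : G) 0 = 0 := map_zero _
  rwa [lambda_apply, one_mul, zero_sub, neg_eq_zero] at h

theorem lambda_one : lambda (1 : G) = 1 := by
  ext b
  rw [lambda_apply, one_mul, one_eq_zero, sub_zero, AddMonoid.End.coe_one, id_eq]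

theorem lambda_mul (a b : G) : lambda (a * b) = lambda a * lambda b := by
  ext c
  calc
    lambda (a * b) c = lambda a (b * c) - lambda a b := by
      simp only [lambda_apply, mul_assoc, sub_sub_sub_cancel_right]
    _ = lambda a (lambda b c) := by rw [← map_sub, lambda_apply b]

variable (G) in
/-- The action `a ↦ λ_a` of the multiplicative group on the additive group. -/
def lambdaHom : G →* AddMonoid.End G where
  toFun := lambda
  map_one' := lambda_one
  map_mul' := lambda_mul

variable (G) in
/-- The socle of a left brace, as the kernel of `a ↦ λ_a`; being a kernel, it is a subgroup of the
multiplicative group. -/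
def socle : Subgroup G :=
  (lambdaHom G).ker

instance socle_normal : (socle G).Normal :=
  (lambdaHom G).normal_ker

theorem mem_socle_iff {a : G} : a ∈ socle G ↔ ∀ b, a * b - a = b :=
  DFunLike.ext_iff

theorem mem_socle_iff_mul_eq_add {a : G} : a ∈ socle G ↔ ∀ b, a * b = a + b := by
  simp only [mem_socle_iff, sub_eq_iff_eq_add']

theorem lambda_eq_conj_of_mem_socle {a : G} (ha : a ∈ socle G) (b : G) :
    lambda b a = b * a * b⁻¹ := by
  symm
  calc
    b * a * b⁻¹ = b * (a + b⁻¹) := by rw [mul_assoc, mem_socle_iff_mul_eq_add.mp ha]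
    _ = b * a + b * b⁻¹ - b := mul_add_eq b a b⁻¹
    _ = lambda b a := by rw [mul_inv_cancel, one_eq_zero, add_zero, lambda_apply]

theorem lambda_mem_socle {a : G} (ha : a ∈ socle G) (b : G) : lambda b a ∈ socle G := by
  rw [lambda_eq_conj_of_mem_socle ha]
  exact socle_normal.conj_mem a ha b

end IsLeftBrace

open IsLeftBrace

/-- The socle `Soc(G) = {a : λ_a = id}` of a left brace equals
`{a : a·b = a + b for all b}`, and it is an ideal: a normal subgroup of the
multiplicative group which is invariant under every `λ_b`. -/
theorem leftBrace_socle_ideal {G : Type*} [AddCommGroup G] [Group G]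
    (hB : ∀ a b c : G, a * (b + c) = a * b + a * c - a) :
    ({a : G | ∀ b : G, a * b - a = b} = {a : G | ∀ b : G, a * b = a + b}) ∧
    (∃ H : Subgroup G, (H : Set G) = {a : G | ∀ b : G, a * b - a = b} ∧ H.Normal) ∧
    (∀ b a : G, (∀ c : G, a * c - a = c) →
      ∀ c : G, (b * a - b) * c - (b * a - b) = c) := by
  have : IsLeftBrace G := ⟨hB⟩
  have coe_socle : (socle G : Set G) = {a : G | ∀ b : G, a * b - a = b} :=
    Set.ext fun _ ↦ mem_socle_iff
  refine ⟨?_, ⟨socle G, coe_socle, socle_normal⟩, fun b a ha ↦ ?_⟩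
  · rw [← coe_socle]
    exact Set.ext fun _ ↦ mem_socle_iff_mul_eq_add
  · exact mem_socle_iff.mp (lambda_mem_socle (mem_socle_iff.mpr ha) b)
end

section
/- Let G be a left brace and define λ_a(b) = a·b − a for a,b ∈ G. Then the map r : G × G → G × G defined by r(x,y) = (λ_x(y), λ^{-1}_{λ_x(y)}(x)) is a non-degenerate involutive set-theoretic solution of the Yang–Baxter equation: r is a bijection satisfying the braid relation r^{12} r^{23} r^{12} = r^{23} r^{12} r^{23} on G³, r ∘ r = id_{G×G}, and for each x, y ∈ G both maps σ_x := λ_x and γ_y := (x ↦ λ^{-1}_{λ_x(y)}(x)) are bijections of G. -/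
/-!
A skew left brace acts on its additive group by `λ`, and `λ_x(y) * ρ_y(x) = x * y` where
`ρ_y(x) = λ_x(y)⁻¹ * (x * y)`. The brace axiom makes `ρ` a right action of the multiplicative
group. For any two such actions the braid relation is automatic: both sides have the same first
entry because `λ` is an action, the same last entry because `ρ` is one, and the same product, hence
the same middle entry. Nondegeneracy holds because group actions are by bijections. When addition
is commutative, `λ_{λ_x(y)}(ρ_y(x)) = x * y - λ_x(y) = x`, and since products are preserved the map
is involutive.
-/

/-- A braiding operator on a monoid, in the sense of Lu, Yan and Zhu: writing
`r (x, y) = (σ_x(y), ρ_y(x))`, the map `σ` is a left action of `M` on itself, `ρ` is a right action,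
and `σ_x(y) * ρ_y(x) = x * y`. -/
structure IsBraidingOperator {M : Type*} [Monoid M] (r : M × M → M × M) : Prop where
  fst_mul_snd (x y : M) : (r (x, y)).1 * (r (x, y)).2 = x * y
  fst_one_left (y : M) : (r (1, y)).1 = y
  fst_mul_left (x y z : M) : (r (x * y, z)).1 = (r (x, (r (y, z)).1)).1
  snd_one_right (x : M) : (r (x, 1)).2 = x
  snd_mul_right (x y z : M) : (r (x, y * z)).2 = (r ((r (x, y)).2, z)).2

namespace IsBraidingOperator

section Monoid

variable {M : Type*} [Monoid M] {r : M × M → M × M}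

theorem prod_r12 (h : IsBraidingOperator r) (p : M × M × M) :
    (r12 r p).1 * (r12 r p).2.1 * (r12 r p).2.2 = p.1 * p.2.1 * p.2.2 := by
  simp only [r12, h.fst_mul_snd]

theorem prod_r23 (h : IsBraidingOperator r) (p : M × M × M) :
    (r23 r p).1 * (r23 r p).2.1 * (r23 r p).2.2 = p.1 * p.2.1 * p.2.2 := by
  simp only [r23, mul_assoc, h.fst_mul_snd]

theorem fst_fst_snd (h : IsBraidingOperator r) (x y z : M) :
    (r ((r (x, y)).1, (r ((r (x, y)).2, z)).1)).1 = (r (x, (r (y, z)).1)).1 := by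
  rw [← h.fst_mul_left, h.fst_mul_snd, h.fst_mul_left]

theorem snd_snd_fst (h : IsBraidingOperator r) (x y z : M) :
    (r ((r (x, (r (y, z)).1)).2, (r (y, z)).2)).2 = (r ((r (x, y)).2, z)).2 := by
  rw [← h.snd_mul_right, h.fst_mul_snd, h.snd_mul_right]

end Monoid

theorem braid_relation {M : Type*} [CancelMonoid M] {r : M × M → M × M}
    (h : IsBraidingOperator r) : r12 r ∘ r23 r ∘ r12 r = r23 r ∘ r12 r ∘ r23 r := by
  funext ⟨x, y, z⟩
  set p := (r12 r ∘ r23 r ∘ r12 r) (x, y, z)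
  set q := (r23 r ∘ r12 r ∘ r23 r) (x, y, z)
  have first_eq : p.1 = q.1 := h.fst_fst_snd x y z
  have last_eq : p.2.2 = q.2.2 := (h.snd_snd_fst x y z).symm
  have prod_eq : p.1 * p.2.1 * p.2.2 = q.1 * q.2.1 * q.2.2 := by
    simp only [p, q, Function.comp_apply, h.prod_r12, h.prod_r23]
  have middle_eq : p.2.1 = q.2.1 := by
    rw [first_eq, last_eq] at prod_eq
    exact mul_left_cancel (mul_right_cancel prod_eq)
  exact Prod.ext first_eq (Prod.ext middle_eq last_eq)

section Group

variable {G : Type*} [Group G] {r : G × G → G × G}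

theorem bijective_fst (h : IsBraidingOperator r) (x : G) :
    Function.Bijective fun y => (r (x, y)).1 := by
  refine Function.bijective_iff_has_inverse.mpr ⟨fun y => (r (x⁻¹, y)).1, fun y => ?_, fun y => ?_⟩
  · simp only [← h.fst_mul_left, inv_mul_cancel, h.fst_one_left]
  · simp only [← h.fst_mul_left, mul_inv_cancel, h.fst_one_left]

theorem bijective_snd (h : IsBraidingOperator r) (y : G) :
    Function.Bijective fun x => (r (x, y)).2 := by
  refine Function.bijective_iff_has_inverse.mpr ⟨fun x => (r (x, y⁻¹)).2, fun x => ?_, fun x => ?_⟩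
  · simp only [← h.snd_mul_right, mul_inv_cancel, h.snd_one_right]
  · simp only [← h.snd_mul_right, inv_mul_cancel, h.snd_one_right]

end Group

end IsBraidingOperator

/-- The compatibility axiom of a skew left brace (Guarnieri–Vendramin) between an additive group,
not assumed commutative, and a group structure on the same type. When addition is commutative it is
the axiom of a left brace. -/
class IsSkewLeftBrace (G : Type*) [AddGroup G] [Group G] : Prop where
  protected mul_add (a b c : G) : a * (b + c) = a * b - a + a * c

namespace IsSkewLeftBrace

section Maps

variable {G : Type*} [AddGroup G] [Group G]

/-- The map `λ_a(b) = -a + a * b`, by which the multiplicative group of a skew left brace acts on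
its additive group. -/
def lambdaMap (a b : G) : G := -a + a * b

/-- The map `(x, y) ↦ (λ_x(y), λ_x(y)⁻¹ * (x * y))`. Its second component is written so that the
product of the components is visibly `x * y`; when addition is commutative, it is the preimage
of `x` under `λ_{λ_x(y)}`. -/
def braiding (p : G × G) : G × G :=
  (lambdaMap p.1 p.2, (lambdaMap p.1 p.2)⁻¹ * (p.1 * p.2))

theorem add_lambdaMap (a b : G) : a + lambdaMap a b = a * b :=
  add_neg_cancel_left a (a * b)

theorem braiding_fst_mul_snd (p : G × G) : (braiding p).1 * (braiding p).2 = p.1 * p.2 :=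
  mul_inv_cancel_left _ _

end Maps

section SkewLeftBrace

variable {G : Type*} [AddGroup G] [Group G] [IsSkewLeftBrace G]

theorem lambdaMap_add (a b c : G) : lambdaMap a (b + c) = lambdaMap a b + lambdaMap a c := by
  simp only [lambdaMap, IsSkewLeftBrace.mul_add, sub_eq_add_neg, add_assoc]

theorem lambdaMap_zero (a : G) : lambdaMap a 0 = 0 := by
  have h := lambdaMap_add a 0 0
  rwa [add_zero, left_eq_add] at h

variable (G) in
theorem one_eq_zero : (1 : G) = 0 := by
  have h := add_lambdaMap (1 : G) 0
  rwa [lambdaMap_zero, add_zero, one_mul] at h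

theorem lambdaMap_one_right (a : G) : lambdaMap a 1 = 1 := by
  rw [one_eq_zero, lambdaMap_zero]

theorem lambdaMap_one_left (b : G) : lambdaMap 1 b = b := by
  rw [lambdaMap, one_mul, one_eq_zero, neg_zero, zero_add]

theorem lambdaMap_mul_left (a b c : G) :
    lambdaMap (a * b) c = lambdaMap a (lambdaMap b c) := by
  refine add_left_cancel (a := a * b) ?_
  calc a * b + lambdaMap (a * b) c = a * (b * c) := by rw [add_lambdaMap, mul_assoc]
    _ = a + lambdaMap a (b + lambdaMap b c) := by rw [add_lambdaMap, add_lambdaMap]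
    _ = a * b + lambdaMap a (lambdaMap b c) := by rw [lambdaMap_add, ← add_assoc, add_lambdaMap]

theorem lambdaMap_mul_right (x y z : G) :
    lambdaMap x (y * z) = lambdaMap x y * lambdaMap (braiding (x, y)).2 z := by
  calc lambdaMap x (y * z)
      = lambdaMap x y + lambdaMap x (lambdaMap y z) := by rw [← lambdaMap_add, add_lambdaMap]
    _ = lambdaMap x y + lambdaMap ((braiding (x, y)).1 * (braiding (x, y)).2) z := by
        rw [braiding_fst_mul_snd, lambdaMap_mul_left]
    _ = lambdaMap x y + lambdaMap (lambdaMap x y) (lambdaMap (braiding (x, y)).2 z) := by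
        rw [lambdaMap_mul_left, braiding]
    _ = lambdaMap x y * lambdaMap (braiding (x, y)).2 z := add_lambdaMap _ _

theorem braiding_snd_mul_right (x y z : G) :
    (braiding (x, y * z)).2 = (braiding ((braiding (x, y)).2, z)).2 := by
  change (lambdaMap x (y * z))⁻¹ * (x * (y * z)) =
    (lambdaMap (braiding (x, y)).2 z)⁻¹ * ((lambdaMap x y)⁻¹ * (x * y) * z)
  rw [lambdaMap_mul_right, mul_inv_rev]
  simp only [mul_assoc]

theorem isBraidingOperator_braiding : IsBraidingOperator (braiding : G × G → G × G) where
  fst_mul_snd x y := braiding_fst_mul_snd (x, y)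
  fst_one_left := lambdaMap_one_left
  fst_mul_left := lambdaMap_mul_left
  snd_one_right x := by simp only [braiding, lambdaMap_one_right, inv_one, one_mul, mul_one]
  snd_mul_right := braiding_snd_mul_right

end SkewLeftBrace

theorem braiding_involutive {G : Type*} [AddCommGroup G] [Group G] :
    Function.Involutive (braiding : G × G → G × G) := by
  rintro ⟨x, y⟩
  have fst_eq : (braiding (braiding (x, y))).1 = x := by
    change -lambdaMap x y + (braiding (x, y)).1 * (braiding (x, y)).2 = x
    rw [braiding_fst_mul_snd, ← add_lambdaMap, add_comm x, neg_add_cancel_left]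
  have prod_eq : (braiding (braiding (x, y))).1 * (braiding (braiding (x, y))).2 = x * y := by
    rw [braiding_fst_mul_snd, braiding_fst_mul_snd]
  rw [fst_eq] at prod_eq
  exact Prod.ext fst_eq (mul_left_cancel prod_eq)

end IsSkewLeftBrace

/-- For a left brace `G`, the map `r(x,y) = (λ_x(y), λ⁻¹_{λ_x(y)}(x))` is a
non-degenerate involutive set-theoretic solution of the Yang–Baxter equation.
Here `μ a` denotes the inverse of the map `λ_a : b ↦ a·b − a`. -/
theorem leftBrace_gives_solution {G : Type*} [AddCommGroup G] [Group G]
    (hB : ∀ a b c : G, a * (b + c) = a * b + a * c - a)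
    (μ : G → G → G)
    (hμ1 : ∀ a b : G, a * μ a b - a = b)
    (hμ2 : ∀ a b : G, μ a (a * b - a) = b)
    (r : G × G → G × G)
    (hr : ∀ x y : G, r (x, y) = (x * y - x, μ (x * y - x) x)) :
    Function.Bijective r ∧
    r12 r ∘ r23 r ∘ r12 r = r23 r ∘ r12 r ∘ r23 r ∧
    r ∘ r = id ∧
    (∀ x : G, Function.Bijective fun y => (r (x, y)).1) ∧
    (∀ y : G, Function.Bijective fun x => (r (x, y)).2) := by
  have : IsSkewLeftBrace G := ⟨fun a b c => by rw [hB, sub_add_eq_add_sub]⟩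
  have braiding_eq : r = IsSkewLeftBrace.braiding := by
    funext ⟨x, y⟩
    have mul_μ : (x * y - x) * μ (x * y - x) x = x * y := by
      rw [sub_eq_iff_eq_add.mp (hμ1 (x * y - x) x), add_sub_cancel]
    simp only [hr, IsSkewLeftBrace.braiding, IsSkewLeftBrace.lambdaMap, neg_add_eq_sub,
      eq_inv_mul_of_mul_eq mul_μ]
  have involutive : Function.Involutive r := braiding_eq ▸ IsSkewLeftBrace.braiding_involutive
  have isBraiding : IsBraidingOperator r :=
    braiding_eq ▸ IsSkewLeftBrace.isBraidingOperator_braiding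
  exact ⟨involutive.bijective, isBraiding.braid_relation, involutive.comp_self,
    isBraiding.bijective_fst, isBraiding.bijective_snd⟩
end
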